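/- arXiv:1110.2696 — 3 statements merged into one kernel-verified Lean document; each statement's English description precedes it below -/
import Mathlib

section
/- If a : (0,∞) → ℝ satisfies the functional equation a(1/k) = a(k)/k for all k > 0 and a is differentiable at 1, then a'(1) = a(1)/2. -/
/-- if `a : (0,∞) → ℝ` satisfies `a(1/k) = a(k)/k` for all `k > 0` and `a`
is differentiable at `1`, then `a'(1) = a(1)/2`. -/
theorem deriv_at_one_of_functional_equation (a : ℝ → ℝ)
    (hfe : ∀ k : ℝ, 0 < k → a (1 / k) = a k / k)
    (hd : DifferentiableAt ℝ a 1) :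
    deriv a 1 = a 1 / 2 := by
  have hd' : HasDerivAt a (deriv a 1) 1 := hd.hasDerivAt
  -- Differentiate both sides of the functional equation at `1`: this gives `-a'(1) = a'(1) - a(1)`.
  have hinv : HasDerivAt (fun k : ℝ => k⁻¹) (-1) 1 := by
    simpa using hasDerivAt_inv (one_ne_zero : (1 : ℝ) ≠ 0)
  have hl : HasDerivAt (fun k : ℝ => a k⁻¹) (deriv a 1 * (-1)) 1 :=
    HasDerivAt.comp (h₂ := a) (1 : ℝ) (by simpa using hd') hinv
  have hr : HasDerivAt (fun k : ℝ => a k * k⁻¹) (deriv a 1 * (1 : ℝ)⁻¹ + a 1 * (-1)) 1 :=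
    hd'.mul hinv
  have heq : (fun k : ℝ => a k⁻¹) =ᶠ[nhds 1] fun k : ℝ => a k * k⁻¹ := by
    filter_upwards [lt_mem_nhds (one_pos : (0 : ℝ) < 1)] with k hk
    simpa [div_eq_mul_inv] using hfe k hk
  have h := hl.unique (hr.congr_of_eventuallyEq heq)
  rw [inv_one] at h
  linarith
end

section
/- For every real y > 0 the value κ²(iy) is real with 0 < κ²(iy) < 1, and lim_{y→+∞} [ (1/π)·arcosh( (2 − κ²(iy)) / κ²(iy) ) − y ] = −(ln 4)/π. (Equivalently, the conformal map F(τ) = (1/π)·arccos((2 − κ²(τ))/κ²(τ)) of the zero-angle triangle onto a half-strip satisfies F(iy)/i = y − (ln 4)/π + o(1) as y → +∞.) -/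
/-!
On the imaginary axis `τ = iy` both theta series have positive real terms. Write
`A y = Σ e^{-πy(n+1/2)²}` and `B y = Σ e^{-πyn²}`, so that `κ²(iy) = (A y / B y)⁴`.

* `A y < B y`: Poisson summation turns the two series into
  `A y = y^{-1/2} Σ (-1)ⁿ e^{-πn²/y}` and `B y = y^{-1/2} Σ e^{-πn²/y}`, which can be compared termwise.
* As `y → ∞`, dominated convergence gives `B y → 1` and `e^{πy/4} A y = Σ e^{-πyn(n+1)} → 2`
  (the terms `n = 0, -1` survive). Hence `e^{πy} κ²(iy) → 16` and `κ²(iy) → 0`.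
* With `k = κ²(iy)`, `arcosh ((2 - k)/k) = log ((2 - k + 2√(1 - k))/k)`, which equals
  `πy + log ((2 - k + 2√(1 - k))/(e^{πy} k))`, and the last logarithm tends to `log (4/16)`.
-/

open Complex

noncomputable section

/-- Jacobi theta function `θ₂(τ) = Σ_{n∈ℤ} e^{πiτ(n+1/2)²}`. -/
def theta2 (τ : ℂ) : ℂ := ∑' n : ℤ, Complex.exp (Real.pi * Complex.I * τ * (n + 1/2)^2)

/-- Jacobi theta function `θ₃(τ) = Σ_{n∈ℤ} e^{πiτn²}`. -/
def theta3 (τ : ℂ) : ℂ := ∑' n : ℤ, Complex.exp (Real.pi * Complex.I * τ * n^2)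

/-- Jacobi's modular function `κ²(τ) = (θ₂(τ)/θ₃(τ))⁴` (the modular lambda function). -/
def kappaSq (τ : ℂ) : ℂ := (theta2 τ / theta3 τ)^4

/-- The real inverse hyperbolic cosine, `arcosh x = ln(x + √(x² − 1))`. -/
def arcosh (x : ℝ) : ℝ := Real.log (x + Real.sqrt (x^2 - 1))

/-- The real theta series `Σ_{n∈ℤ} e^{-πy(n+a)²}`: the values `a = 1/2` and `a = 0` give `θ₂(iy)`
and `θ₃(iy)`. -/
def gaussTheta (a y : ℝ) : ℝ := ∑' n : ℤ, Real.exp (-Real.pi * y * (n + a)^2)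

lemma summable_gaussTheta (a : ℝ) {y : ℝ} (hy : 0 < y) :
    Summable fun n : ℤ => Real.exp (-Real.pi * y * (n + a)^2) := by
  refine (HurwitzKernelBounds.summable_f_int 0 a hy).congr fun n => ?_
  simp only [HurwitzKernelBounds.f_int, pow_zero, one_mul]
  congr 1
  ring

lemma gaussTheta_pos (a : ℝ) {y : ℝ} (hy : 0 < y) : 0 < gaussTheta a y :=
  (summable_gaussTheta a hy).tsum_pos (fun _ => (Real.exp_pos _).le) 0 (Real.exp_pos _)

lemma theta2_I_mul (y : ℝ) : theta2 (I * y) = (gaussTheta (1/2) y : ℝ) := by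
  rw [theta2, gaussTheta, Complex.ofReal_tsum]
  refine tsum_congr fun n => ?_
  push_cast
  congr 1
  linear_combination (Real.pi * y * ((n : ℂ) + 1/2)^2) * I_sq

lemma theta3_I_mul (y : ℝ) : theta3 (I * y) = (gaussTheta 0 y : ℝ) := by
  rw [theta3, gaussTheta, Complex.ofReal_tsum]
  refine tsum_congr fun n => ?_
  push_cast
  congr 1
  linear_combination (Real.pi * y * (n : ℂ)^2) * I_sq

lemma kappaSq_I_mul (y : ℝ) :
    kappaSq (I * y) = ((gaussTheta (1/2) y / gaussTheta 0 y)^4 : ℝ) := by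
  rw [kappaSq, theta2_I_mul, theta3_I_mul]
  push_cast
  rfl

/-- Poisson summation for the shifted Gaussian with shift `b`, in which the dual sum carries the
character `n ↦ e^{-2πibn}`. -/
lemma gaussTheta_poisson (b : ℝ) {y : ℝ} (hy : 0 < y) :
    (gaussTheta b y : ℂ) =
      ((Real.sqrt y)⁻¹ : ℝ) * ∑' n : ℤ, cexp (-2 * Real.pi * I * b * n) *
        (Real.exp (-Real.pi * y⁻¹ * n^2) : ℝ) := by
  have hs : (Real.sqrt y : ℂ) ≠ 0 := by exact_mod_cast (Real.sqrt_pos.mpr hy).ne'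
  have h := Complex.tsum_exp_neg_quadratic (a := ((y⁻¹ : ℝ) : ℂ))
    (by rw [ofReal_re]; exact inv_pos.mpr hy) (-I * b)
  have hpow : ((y⁻¹ : ℝ) : ℂ) ^ (1 / 2 : ℂ) = ((Real.sqrt y)⁻¹ : ℝ) := by
    rw [← Real.sqrt_inv, Real.sqrt_eq_rpow, ofReal_cpow (inv_pos.mpr hy).le]
    norm_num
  have hleft : ∀ n : ℤ, cexp (-2 * Real.pi * I * b * n) *
      (Real.exp (-Real.pi * y⁻¹ * n^2) : ℝ) =
      cexp (-Real.pi * ((y⁻¹ : ℝ) : ℂ) * n ^ 2 + 2 * Real.pi * (-I * b) * n) := by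
    intro n
    rw [ofReal_exp, ← Complex.exp_add]
    push_cast
    congr 1
    ring
  have hright : ∀ n : ℤ, cexp (-Real.pi / ((y⁻¹ : ℝ) : ℂ) * (n + I * (-I * b)) ^ 2) =
      (Real.exp (-Real.pi * y * (n + b)^2) : ℝ) := by
    intro n
    have hI : I * (-I * b) = b := by linear_combination (-(b : ℂ)) * I_sq
    rw [hI]
    push_cast
    rw [div_inv_eq_mul]
  rw [tsum_congr hleft, h, hpow, tsum_congr hright, ← ofReal_tsum, gaussTheta]
  push_cast
  field_simp

lemma gaussTheta_zero_eq {y : ℝ} (hy : 0 < y) :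
    gaussTheta 0 y = (Real.sqrt y)⁻¹ * ∑' n : ℤ, Real.exp (-Real.pi * y⁻¹ * n^2) := by
  apply ofReal_injective
  rw [gaussTheta_poisson 0 hy, ofReal_mul, ofReal_tsum]
  simp

/-- For the shift `1/2` the dual character is `(-1)ⁿ`. -/
lemma gaussTheta_half_eq {y : ℝ} (hy : 0 < y) :
    gaussTheta (1/2) y =
      (Real.sqrt y)⁻¹ * ∑' n : ℤ, (-1 : ℝ)^n * Real.exp (-Real.pi * y⁻¹ * n^2) := by
  apply ofReal_injective
  rw [gaussTheta_poisson (1/2) hy, ofReal_mul, ofReal_tsum]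
  congr 1
  refine tsum_congr fun n => ?_
  have hchar : cexp (-2 * Real.pi * I * ((1/2 : ℝ) : ℂ) * n) = (-1 : ℂ)^n := by
    rw [show -2 * Real.pi * I * ((1/2 : ℝ) : ℂ) * n = n * (-(Real.pi * I)) by push_cast; ring,
      Complex.exp_int_mul, Complex.exp_neg, Complex.exp_pi_mul_I]
    norm_num
  rw [hchar]
  push_cast
  rfl

lemma gaussTheta_half_lt {y : ℝ} (hy : 0 < y) : gaussTheta (1/2) y < gaussTheta 0 y := by
  rw [gaussTheta_half_eq hy, gaussTheta_zero_eq hy]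
  refine mul_lt_mul_of_pos_left ?_ (inv_pos.mpr (Real.sqrt_pos.mpr hy))
  have hs : Summable fun n : ℤ => Real.exp (-Real.pi * y⁻¹ * n^2) := by
    simpa using summable_gaussTheta 0 (inv_pos.mpr hy)
  have habs : ∀ n : ℤ, |(-1 : ℝ)^n| = 1 := fun n => by simp [abs_zpow]
  refine Summable.tsum_lt_tsum (i := 1) (fun n => ?_) ?_ ?_ hs
  · exact mul_le_of_le_one_left (Real.exp_pos _).le ((le_abs_self _).trans (habs n).le)
  · have := Real.exp_pos (-Real.pi * y⁻¹ * ((1 : ℤ) : ℝ)^2)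
    rw [zpow_one]
    linarith
  · refine Summable.of_norm_bounded hs fun n => ?_
    rw [norm_mul, Real.norm_eq_abs, habs, one_mul, Real.norm_of_nonneg (Real.exp_pos _).le]

open Filter Topology in
lemma tendsto_gaussTheta_zero : Tendsto (gaussTheta 0) atTop (𝓝 1) := by
  have hlim : ∑' n : ℤ, (if n = 0 then (1 : ℝ) else 0) = 1 := by simp
  rw [← hlim]
  refine tendsto_tsum_of_dominated_convergence (summable_gaussTheta 0 one_pos) (fun n => ?_) ?_
  · split_ifs with hn
    · simp [hn]
    · have hc : 0 < Real.pi * ((n : ℝ) + 0)^2 := by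
        have : (n : ℝ) ≠ 0 := by exact_mod_cast hn
        rw [add_zero]
        positivity
      refine (Real.tendsto_exp_neg_atTop_nhds_zero.comp
        (tendsto_id.const_mul_atTop hc)).congr fun y => ?_
      simp only [Function.comp, id]
      congr 1
      ring
  · filter_upwards [eventually_ge_atTop 1] with y hy n
    rw [Real.norm_of_nonneg (Real.exp_pos _).le, Real.exp_le_exp]
    have : 0 ≤ Real.pi * ((n : ℝ) + 0)^2 := by positivity
    nlinarith

open Filter Topology in
lemma tendsto_exp_mul_gaussTheta_half :
    Tendsto (fun y => Real.exp (Real.pi * y / 4) * gaussTheta (1/2) y) atTop (𝓝 2) := by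
  have hlim : ∑' n : ℤ, (if n ∈ ({0, -1} : Finset ℤ) then (1 : ℝ) else 0) = 2 := by
    rw [tsum_eq_sum (s := {0, -1}) (fun n hn => if_neg hn), Finset.sum_ite_mem]
    norm_num
  have hterm : ∀ (y : ℝ) (n : ℤ), Real.exp (Real.pi * y / 4) *
      Real.exp (-Real.pi * y * (n + 1/2)^2) = Real.exp (-(Real.pi * (n * (n + 1)) * y)) := by
    intro y n
    rw [← Real.exp_add]
    congr 1
    ring
  have hprod : ∀ n : ℤ, n ∉ ({0, -1} : Finset ℤ) → 0 < n * (n + 1) := by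
    intro n hn
    simp only [Finset.mem_insert, Finset.mem_singleton, not_or] at hn
    rcases lt_or_ge n 0 with h | h
    · exact mul_pos_of_neg_of_neg h (by lia)
    · exact mul_pos (by lia) (by lia)
  have hnonneg : ∀ n : ℤ, 0 ≤ n * (n + 1) := by
    intro n
    by_cases hn : n ∈ ({0, -1} : Finset ℤ)
    · simp only [Finset.mem_insert, Finset.mem_singleton] at hn
      rcases hn with rfl | rfl <;> norm_num
    · exact (hprod n hn).le
  simp only [gaussTheta, ← tsum_mul_left, hterm]
  rw [← hlim]
  have hbound : Summable fun n : ℤ => Real.exp (-(Real.pi * (n * (n + 1)) * 1)) := by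
    simpa only [hterm] using (summable_gaussTheta (1/2) one_pos).mul_left (Real.exp (Real.pi * 1 / 4))
  refine tendsto_tsum_of_dominated_convergence hbound (fun n => ?_) ?_
  · split_ifs with hn
    · simp only [Finset.mem_insert, Finset.mem_singleton] at hn
      rcases hn with rfl | rfl <;> simp
    · have hc : 0 < Real.pi * ((n : ℝ) * (n + 1)) :=
        mul_pos Real.pi_pos (by exact_mod_cast hprod n hn)
      exact Real.tendsto_exp_neg_atTop_nhds_zero.comp (tendsto_id.const_mul_atTop hc)
  · filter_upwards [eventually_ge_atTop 1] with y hy n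
    rw [Real.norm_of_nonneg (Real.exp_pos _).le, Real.exp_le_exp]
    have : 0 ≤ Real.pi * ((n : ℝ) * (n + 1)) :=
      mul_nonneg Real.pi_pos.le (by exact_mod_cast hnonneg n)
    nlinarith

/-- Closed form of `arcosh ((2 - k)/k)`, with an arbitrary additive constant `c` split off. -/
lemma arcosh_two_sub_div {k : ℝ} (hk : 0 < k) (hk1 : k < 1) (c : ℝ) :
    arcosh ((2 - k) / k) =
      c + Real.log ((2 - k + 2 * Real.sqrt (1 - k)) / (Real.exp c * k)) := by
  have hsq : ((2 - k) / k)^2 - 1 = (2 / k)^2 * (1 - k) := by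
    field_simp
    ring
  have hroot : Real.sqrt (((2 - k) / k)^2 - 1) = 2 / k * Real.sqrt (1 - k) := by
    rw [hsq, Real.sqrt_mul (by positivity), Real.sqrt_sq (by positivity)]
  have hnum : 0 < 2 - k + 2 * Real.sqrt (1 - k) := by
    have := Real.sqrt_nonneg (1 - k)
    linarith
  have hE := Real.exp_pos c
  rw [arcosh, hroot, Real.log_div hnum.ne' (by positivity), Real.log_mul hE.ne' hk.ne', Real.log_exp,
    show (2 - k) / k + 2 / k * Real.sqrt (1 - k) = (2 - k + 2 * Real.sqrt (1 - k)) / k by ring,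
    Real.log_div hnum.ne' hk.ne']
  ring

/-- for every `y > 0`, `κ²(iy)` is real with `0 < κ²(iy) < 1`, and
`(1/π)·arcosh((2 − κ²(iy))/κ²(iy)) − y → −(ln 4)/π` as `y → +∞`; i.e. the map
`F(τ) = (1/π) arccos((2−κ²(τ))/κ²(τ))` satisfies `F(iy)/i = y − (ln 4)/π + o(1)`. -/
theorem halfstrip_map_asymptotic :
    (∀ y : ℝ, 0 < y → (kappaSq (Complex.I * y)).im = 0 ∧
      0 < (kappaSq (Complex.I * y)).re ∧ (kappaSq (Complex.I * y)).re < 1) ∧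
    Filter.Tendsto
      (fun y : ℝ => (1 / Real.pi) *
        arcosh ((2 - (kappaSq (Complex.I * y)).re) / (kappaSq (Complex.I * y)).re) - y)
      Filter.atTop (nhds (-(Real.log 4) / Real.pi)) := by
  simp only [kappaSq_I_mul, ofReal_re, ofReal_im, true_and]
  set k : ℝ → ℝ := fun y => (gaussTheta (1/2) y / gaussTheta 0 y)^4 with hkdef
  have hk : ∀ y : ℝ, 0 < y → 0 < k y ∧ k y < 1 := by
    intro y hy
    have hA := gaussTheta_pos (1/2) hy
    have hB := gaussTheta_pos 0 hy
    exact ⟨by positivity, pow_lt_one₀ (by positivity)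
      ((div_lt_one hB).mpr (gaussTheta_half_lt hy)) (by norm_num)⟩
  refine ⟨hk, ?_⟩
  have hEk : Filter.Tendsto (fun y => Real.exp (Real.pi * y) * k y) Filter.atTop (nhds 16) := by
    have h := (tendsto_exp_mul_gaussTheta_half.div tendsto_gaussTheta_zero one_ne_zero).pow 4
    rw [show ((2 : ℝ) / 1)^4 = 16 by norm_num] at h
    refine h.congr fun y => ?_
    simp only [hkdef, Pi.div_apply]
    rw [mul_div_assoc, mul_pow, ← Real.exp_nat_mul]
    congr 2
    push_cast
    ring
  have hk0 : Filter.Tendsto k Filter.atTop (nhds 0) := by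
    have hE : Filter.Tendsto (fun y => Real.exp (-(Real.pi * y))) Filter.atTop (nhds 0) :=
      Real.tendsto_exp_neg_atTop_nhds_zero.comp
        (Filter.tendsto_id.const_mul_atTop Real.pi_pos)
    have h := hE.mul hEk
    rw [zero_mul] at h
    refine h.congr fun y => ?_
    rw [← mul_assoc, ← Real.exp_add, neg_add_cancel, Real.exp_zero, one_mul]
  have hG : Filter.Tendsto (fun y => Real.log
      ((2 - k y + 2 * Real.sqrt (1 - k y)) / (Real.exp (Real.pi * y) * k y)))
      Filter.atTop (nhds (-Real.log 4)) := by
    have h1 := ((hk0.const_sub 2).add (((hk0.const_sub 1).sqrt).const_mul 2)).div hEk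
      (by norm_num)
    have h2 := h1.log (by norm_num)
    rw [show (2 - 0 + 2 * Real.sqrt (1 - 0)) / 16 = (4 : ℝ)⁻¹ by norm_num, Real.log_inv] at h2
    exact h2
  refine (hG.div_const Real.pi).congr' ?_
  filter_upwards [Filter.eventually_gt_atTop 0] with y hy
  change _ = 1 / Real.pi * arcosh ((2 - k y) / k y) - y
  rw [arcosh_two_sub_div (hk y hy).1 (hk y hy).2 (Real.pi * y)]
  field_simp
  ring
end
end

section
/- The map ζ ↦ P(ζ) is a holomorphic bijection from the open rectangle R₀ = {ζ ∈ ℂ : 0 < Re ζ < ω, 0 < Im ζ < π} onto the open lower half-plane {w ∈ ℂ : Im w < 0}. -/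
/-!
The function `wp ω` is the Weierstrass function `℘` of the period pair `(2ω, 2πi)`, and since `℘` is
even and periodic, `P(ζ) = (℘(ω + πi - ζ) - e₂) / 4`. The reflection `ζ ↦ ω + πi - ζ` preserves the
open rectangle `R₀`, and `e₂` is real, so it suffices that `℘` maps `R₀` bijectively onto the lower
half-plane.

The key fact is that `℘ a = ℘ b` forces `b ≡ ±a` modulo the lattice
(`PeriodPair.weierstrassP_eq_imp`). It is obtained from uniqueness for differential equations rather
than from counting zeros. By the cubic relation `℘'(a) = ±℘'(b)`, and replacing `b` by `-b` we may
take the sign to be `+`. Differentiating the cubic relation gives `℘'' = 6℘² - g₂/2`, so the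
difference `h(t) = ℘(a + t) - ℘(b + t)` satisfies a linear equation `h'' = q h` with
`h(0) = h'(0) = 0`. Hence `h` vanishes near `0`, and by the identity theorem wherever it is defined.
Letting `a + t` tend to the pole at `0` shows that `b - a` is a pole too.

Injectivity on `R₀` follows. As the lattice is stable under conjugation, `℘ (conj z) = conj (℘ z)`.
Therefore `℘` is real on the boundary of `R₀`, whereas a real value at an interior point `z` would
give `conj z ≡ ±z`, which is impossible. So `Im ℘` has constant sign on `R₀`, and
`℘ z = 1 / z² + o(1)` near `0` shows that it is negative. The image of `R₀` is open, and relatively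
closed in the lower half-plane: a limit of values comes from a point of the closed rectangle, which
is neither the pole `0` nor a boundary point. By connectedness the image is the whole lower
half-plane.
-/

open Complex

noncomputable section

/-- The lattice `Λ = {2mω + 2nω' : m, n ∈ ℤ}` with `ω' = πi`. -/
def latticeΛ (ω : ℝ) : Set ℂ :=
  {z | ∃ m n : ℤ, z = 2 * m * ω + 2 * n * (Real.pi * Complex.I)}

/-- The Weierstrass elliptic function of the lattice `Λ`:
`℘(z) = 1/z² + Σ_{0 ≠ w ∈ Λ} (1/(z−w)² − 1/w²)`. -/
def wp (ω : ℝ) (z : ℂ) : ℂ :=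
  1 / z^2 + ∑' w : {w : ℂ // w ∈ latticeΛ ω ∧ w ≠ 0}, (1 / (z - (w:ℂ))^2 - 1 / (w:ℂ)^2)

/-- `P(ζ) = (℘(ζ + ω + ω') − e₂)/4` where `e₂ = ℘(ω + ω')`, `ω' = πi`. -/
def Pfun (ω : ℝ) (ζ : ℂ) : ℂ :=
  (wp ω (ζ + ω + Real.pi * Complex.I) - wp ω (ω + Real.pi * Complex.I)) / 4

open Filter Topology
open scoped PeriodPair

/-! ### Values of `℘` determine the argument up to sign -/

/-- Uniqueness for `h'' = q h` with zero initial data: a finite order `n` of vanishing of `h` would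
satisfy `n - 2 ≥ n`. -/
theorem eventually_zero_of_linear_ode {h q : ℂ → ℂ} {z₀ : ℂ} (hh : AnalyticAt ℂ h z₀)
    (hq : AnalyticAt ℂ q z₀) (hode : deriv (deriv h) =ᶠ[𝓝 z₀] q * h)
    (h0 : h z₀ = 0) (h1 : deriv h z₀ = 0) : ∀ᶠ z in 𝓝 z₀, h z = 0 := by
  rw [← analyticOrderAt_eq_top]
  have e1 := hh.analyticOrderAt_deriv_add_one
  have e2 := hh.deriv.analyticOrderAt_deriv_add_one
  simp only [h0, h1, sub_zero] at e1 e2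
  rw [analyticOrderAt_congr hode, analyticOrderAt_mul hq hh] at e2
  by_contra hne
  rw [← e2] at e1
  lift analyticOrderAt h z₀ to ℕ using hne with n
  have hqt : analyticOrderAt q z₀ ≠ ⊤ := by
    intro hqt
    simp [hqt] at e1
  lift analyticOrderAt q z₀ to ℕ using hqt with m
  norm_cast at e1
  omega

namespace PeriodPair
variable (L : PeriodPair)

theorem countable_lattice : (L.lattice : Set ℂ).Countable :=
  Set.countable_coe_iff.mp L.latticeEquivProd.toEquiv.injective.countable

theorem isPreconnected_compl_of_countable {s : Set ℂ} (hs : s.Countable) : IsPreconnected sᶜ :=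
  (hs.isConnected_compl_of_one_lt_rank (by simp)).isPreconnected

theorem tendsto_weierstrassP_zero :
    Tendsto ℘[L] (𝓝[≠] 0) (Bornology.cobounded ℂ) := by
  apply tendsto_cobounded_of_meromorphicOrderAt_neg
  rw [L.order_weierstrassP 0 (zero_mem _)]
  decide

theorem eventually_notMem_lattice : ∀ᶠ z in 𝓝[≠] (0 : ℂ), z ∉ L.lattice := by
  filter_upwards [self_mem_nhdsWithin, mem_nhdsWithin_of_mem_nhds
    (L.compl_lattice_sdiff_singleton_mem_nhds 0)] with w hw hw' hm
  exact hw' ⟨hm, hw⟩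

/-- The pole of `℘` at `0`: `℘` does not agree near `0` with a function continuous there. -/
theorem not_eventually_eq_continuousAt {u : ℂ → ℂ} (hu : ContinuousAt u 0)
    (h : ∀ᶠ z in 𝓝[≠] (0 : ℂ), ℘[L] z = u z) : False := by
  have h1 : Tendsto u (𝓝[≠] 0) (Bornology.cobounded ℂ) := L.tendsto_weierstrassP_zero.congr' h
  have h2 : Tendsto u (𝓝[≠] 0) (𝓝 (u 0)) := hu.tendsto.mono_left nhdsWithin_le_nhds
  exact h2.not_tendsto (Metric.disjoint_nhds_cobounded _) h1

/-- Differentiating the cubic relation gives `℘' * (2 ℘'' - (12 ℘² - g₂)) = 0` off the lattice, where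
one of the two analytic factors must vanish identically; it is not `℘'`, as `℘` is not constant. -/
theorem deriv_derivWeierstrassP {z : ℂ} (hz : z ∉ L.lattice) :
    deriv ℘'[L] z = 6 * ℘[L] z ^ 2 - L.g₂ / 2 := by
  have hP := L.analyticOnNhd_weierstrassP
  have hP' := L.analyticOnNhd_derivWeierstrassP
  have hopen : IsOpen (L.lattice : Set ℂ)ᶜ := L.isClosed_lattice.isOpen_compl
  have hpre := isPreconnected_compl_of_countable L.countable_lattice
  have key := AnalyticOnNhd.eq_zero_or_eq_zero_of_mul_eq_zero (f := ℘'[L])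
    (g := fun z ↦ 2 * deriv ℘'[L] z - (12 * ℘[L] z ^ 2 - L.g₂))
    (U := (L.lattice : Set ℂ)ᶜ) hP'
    ((analyticOnNhd_const.mul hP'.deriv).sub
      ((analyticOnNhd_const.mul (hP.pow 2)).sub analyticOnNhd_const)) (fun w hw ↦ ?_) hpre
  · rcases key with h | h
    · exfalso
      have hc : ∀ w ∉ L.lattice, ℘[L] w = ℘[L] z := by
        intro w hw
        exact hopen.is_const_of_deriv_eq_zero hpre L.differentiableOn_weierstrassP
          (fun x hx ↦ by simpa using h x hx) hw hz
      exact L.not_eventually_eq_continuousAt (u := fun _ ↦ ℘[L] z) continuousAt_const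
        (L.eventually_notMem_lattice.mono hc)
    · linear_combination (h z hz) / 2
  · have hd : HasDerivAt ℘[L] (℘'[L] w) w := by
      rw [← L.deriv_weierstrassP]; exact (hP w hw).differentiableAt.hasDerivAt
    have hd' : HasDerivAt ℘'[L] (deriv ℘'[L] w) w := (hP' w hw).differentiableAt.hasDerivAt
    have e : (fun z ↦ ℘'[L] z ^ 2) =ᶠ[𝓝 w]
        fun z ↦ 4 * ℘[L] z ^ 3 - L.g₂ * ℘[L] z - L.g₃ := by
      filter_upwards [hopen.mem_nhds hw] with x hx using L.derivWeierstrassP_sq x hx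
    have := e.deriv_eq
    rw [(hd'.fun_pow 2).deriv,
      ((((hd.fun_pow 3).const_mul 4).fun_sub (hd.const_mul L.g₂)).sub_const L.g₃).deriv] at this
    push_cast at this
    linear_combination this

/-- If `℘` and `℘'` take the same values at `a` and `b`, then `℘(a + t) = ℘(b + t)` for all `t`, so
`b - a` is a period. -/
theorem sub_mem_of_eq_of_deriv_eq {a b : ℂ} (ha : a ∉ L.lattice) (hb : b ∉ L.lattice)
    (h : ℘[L] a = ℘[L] b) (h' : ℘'[L] a = ℘'[L] b) : b - a ∈ L.lattice := by
  by_contra hab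
  have hopen : IsOpen (L.lattice : Set ℂ)ᶜ := L.isClosed_lattice.isOpen_compl
  have hev : ∀ {c : ℂ}, c ∉ L.lattice → ∀ᶠ t in 𝓝 (0 : ℂ), c + t ∉ L.lattice := by
    intro c hc
    have : ContinuousAt (fun t : ℂ ↦ c + t) 0 := by fun_prop
    exact this (hopen.mem_nhds (by simpa using hc))
  have han : ∀ {c t : ℂ}, c + t ∉ L.lattice → AnalyticAt ℂ (fun t ↦ ℘[L] (c + t)) t := by
    intro c t hc
    exact (L.analyticOnNhd_weierstrassP (c + t) hc).fun_comp (f := fun t ↦ c + t) (by fun_prop)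
  have hd : ∀ {c t : ℂ}, c + t ∉ L.lattice →
      HasDerivAt (fun t ↦ ℘[L] (c + t)) (℘'[L] (c + t)) t := by
    intro c t hc
    have := (L.analyticOnNhd_weierstrassP (c + t) hc).differentiableAt.hasDerivAt
    rw [L.deriv_weierstrassP] at this
    exact this.comp_const_add c t
  have hd' : ∀ {c t : ℂ}, c + t ∉ L.lattice →
      HasDerivAt (fun t ↦ ℘'[L] (c + t)) (6 * ℘[L] (c + t) ^ 2 - L.g₂ / 2) t := by
    intro c t hc
    have := (L.analyticOnNhd_derivWeierstrassP (c + t) hc).differentiableAt.hasDerivAt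
    rw [L.deriv_derivWeierstrassP hc] at this
    exact this.comp_const_add c t
  have ha0 : a + 0 ∉ L.lattice := by simpa using ha
  have hb0 : b + 0 ∉ L.lattice := by simpa using hb
  have hder : deriv (fun t ↦ ℘[L] (a + t) - ℘[L] (b + t)) =ᶠ[𝓝 0]
      fun t ↦ ℘'[L] (a + t) - ℘'[L] (b + t) := by
    filter_upwards [hev ha, hev hb] with t h1 h2 using ((hd h1).sub (hd h2)).deriv
  have hloc := eventually_zero_of_linear_ode (z₀ := 0)
    (h := fun t ↦ ℘[L] (a + t) - ℘[L] (b + t))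
    (q := fun t ↦ 6 * (℘[L] (a + t) + ℘[L] (b + t)))
    ((han ha0).sub (han hb0)) (analyticAt_const.mul ((han ha0).add (han hb0)))
    (by
      refine hder.deriv.trans ?_
      filter_upwards [hev ha, hev hb] with t h1 h2
      rw [((hd' h1).fun_sub (hd' h2)).deriv]
      simp only [Pi.mul_apply]
      ring)
    (by simp [h]) (by rw [hder.eq_of_nhds]; simp [h'])
  set S : Set ℂ := (fun t ↦ a + t) ⁻¹' L.lattice ∪ (fun t ↦ b + t) ⁻¹' L.lattice with hS
  have hSc : S.Countable := (L.countable_lattice.preimage (add_right_injective a)).union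
    (L.countable_lattice.preimage (add_right_injective b))
  have heq : Set.EqOn (fun t ↦ ℘[L] (a + t)) (fun t ↦ ℘[L] (b + t)) Sᶜ := by
    refine AnalyticOnNhd.eqOn_of_preconnected_of_eventuallyEq (𝕜 := ℂ) (z₀ := 0) ?_ ?_
      (isPreconnected_compl_of_countable hSc) ?_ (hloc.mono fun t ht ↦ sub_eq_zero.mp ht)
    · intro t ht
      exact han fun hm ↦ ht (Or.inl hm)
    · intro t ht
      exact han fun hm ↦ ht (Or.inr hm)
    · simp [hS, ha, hb]
  -- With `s = a + t` tending to `0`, the left side has a pole, while `℘` is continuous at `b - a`.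
  refine L.not_eventually_eq_continuousAt (u := fun s ↦ ℘[L] (b - a + s)) ?_ ?_
  · exact (han (by simpa using hab)).continuousAt
  · filter_upwards [L.eventually_notMem_lattice, (hev hab).filter_mono nhdsWithin_le_nhds]
      with s h1 h2
    have := heq (x := s - a) (by
      simp only [hS, Set.mem_compl_iff, Set.mem_union, Set.mem_preimage, SetLike.mem_coe]
      rintro (hm | hm)
      · exact h1 (by convert hm using 1; ring)
      · exact h2 (by convert hm using 1; ring))
    simp only at this
    convert this using 2 <;> ring

/-- `℘ a = ℘ b` only if `b ≡ ±a` modulo the lattice. -/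
theorem weierstrassP_eq_imp {a b : ℂ} (ha : a ∉ L.lattice) (hb : b ∉ L.lattice)
    (h : ℘[L] a = ℘[L] b) : b - a ∈ L.lattice ∨ b + a ∈ L.lattice := by
  have hsq : ℘'[L] a ^ 2 = ℘'[L] b ^ 2 := by
    rw [L.derivWeierstrassP_sq a ha, L.derivWeierstrassP_sq b hb, h]
  rcases sq_eq_sq_iff_eq_or_eq_neg.mp hsq with h' | h'
  · exact Or.inl (L.sub_mem_of_eq_of_deriv_eq ha hb h h')
  · right
    have := L.sub_mem_of_eq_of_deriv_eq (a := a) (b := -b) ha (by simpa using hb)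
      (by simpa using h) (by simpa using h')
    rw [← neg_mem_iff]
    convert this using 1; ring
end PeriodPair

/-! ### The rectangular lattice -/

/-- The pair of periods `2ω`, `2πi`, which spans the lattice `Λ`. -/
def rectPeriods (ω : ℝ) (hω : 0 < ω) : PeriodPair where
  ω₁ := 2 * ω
  ω₂ := 2 * Real.pi * I
  indep := by
    rw [LinearIndependent.pair_iff]
    intro s t h
    have h1 := congrArg Complex.re h
    have h2 := congrArg Complex.im h
    simp at h1 h2
    exact ⟨h1.resolve_right hω.ne', h2⟩

section Rect
variable {ω : ℝ} (hω : 0 < ω)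

theorem mem_rect_lattice {z : ℂ} : z ∈ (rectPeriods ω hω).lattice ↔
    ∃ m n : ℤ, z.re = 2 * ω * m ∧ z.im = 2 * Real.pi * n := by
  rw [PeriodPair.mem_lattice]
  refine exists_congr fun m ↦ exists_congr fun n ↦ ?_
  constructor
  · rintro rfl
    constructor <;> simp [rectPeriods] <;> ring
  · rintro ⟨h1, h2⟩
    apply Complex.ext <;> simp [rectPeriods, h1, h2] <;> ring

theorem coe_rect_lattice : ((rectPeriods ω hω).lattice : Set ℂ) = latticeΛ ω := by
  ext z
  rw [SetLike.mem_coe, PeriodPair.mem_lattice]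
  refine exists_congr fun m ↦ exists_congr fun n ↦ ?_
  rw [eq_comm]
  have : (m : ℂ) * (rectPeriods ω hω).ω₁ + n * (rectPeriods ω hω).ω₂ =
    2 * m * ω + 2 * n * (Real.pi * I) := by simp only [rectPeriods]; ring
  rw [this]

/-- The lattice sum in Mathlib includes `l = 0`; its term is `1 / z ^ 2 - 1 / 0 ^ 2 = 1 / z ^ 2`. -/
theorem wp_eq (z : ℂ) : wp ω z = ℘[rectPeriods ω hω] z := by
  set L := rectPeriods ω hω
  have hs := (L.hasSum_weierstrassPExcept 0 z)
  rw [← L.weierstrassPExcept_add 0 z, wp]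
  simp only [ZeroMemClass.coe_zero, sub_zero, ne_eq, OfNat.ofNat_ne_zero, not_false_eq_true,
    zero_pow, div_zero]
  rw [add_comm]
  congr 1
  let f : ℂ → ℂ := fun w ↦ 1 / (z - w) ^ 2 - 1 / w ^ 2
  have e1 : PeriodPair.weierstrassPExcept L 0 z =
      ∑' l : L.lattice, ({0}ᶜ : Set ℂ).indicator f l := by
    rw [PeriodPair.weierstrassPExcept]
    refine tsum_congr fun l ↦ ?_
    by_cases h : (l : ℂ) = 0 <;> simp [h, f]
  rw [e1]
  change ∑' w : ↥{w : ℂ | w ∈ latticeΛ ω ∧ w ≠ 0}, f w =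
    ∑' l : ↥(L.lattice : Set ℂ), ({0}ᶜ : Set ℂ).indicator f l
  rw [tsum_subtype, tsum_subtype (L.lattice : Set ℂ), Set.indicator_indicator, coe_rect_lattice]
  rfl

theorem weierstrassP_conj (z : ℂ) :
    ℘[rectPeriods ω hω] (starRingEnd ℂ z) = starRingEnd ℂ (℘[rectPeriods ω hω] z) := by
  set L := rectPeriods ω hω
  have hmem : ∀ l : ℂ, l ∈ L.lattice → starRingEnd ℂ l ∈ L.lattice := by
    intro l hl
    rw [mem_rect_lattice] at hl ⊢
    obtain ⟨m, n, h1, h2⟩ := hl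
    exact ⟨m, -n, by simpa using h1, by simp [h2]⟩
  let e : L.lattice ≃ L.lattice :=
    { toFun := fun l ↦ ⟨starRingEnd ℂ l, hmem _ l.2⟩
      invFun := fun l ↦ ⟨starRingEnd ℂ l, hmem _ l.2⟩
      left_inv := fun l ↦ by simp
      right_inv := fun l ↦ by simp }
  rw [PeriodPair.weierstrassP, PeriodPair.weierstrassP, Complex.conj_tsum, ← e.tsum_eq]
  refine tsum_congr fun l ↦ ?_
  simp [e]

theorem weierstrassP_add_period {z l : ℂ} (hl : l ∈ (rectPeriods ω hω).lattice) :
    ℘[rectPeriods ω hω] (z + l) = ℘[rectPeriods ω hω] z :=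
  (rectPeriods ω hω).weierstrassP_add_coe z ⟨l, hl⟩

/-! ### `℘` on the rectangle -/

/-- The open rectangle `R₀ = (0, ω) × (0, π)`. -/
def openRect (ω : ℝ) : Set ℂ := {z | 0 < z.re ∧ z.re < ω ∧ 0 < z.im ∧ z.im < Real.pi}

/-- `℘` is real on the four lines bounding the rectangle: there `conj z` is `z` or `-z` up to a
period. -/
theorem weierstrassP_im_eq_zero {z : ℂ}
    (h : z.re = 0 ∨ z.re = ω ∨ z.im = 0 ∨ z.im = Real.pi) :
    (℘[rectPeriods ω hω] z).im = 0 := by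
  rw [← Complex.conj_eq_iff_im, ← weierstrassP_conj]
  rcases h with h | h | h | h
  · rw [← PeriodPair.weierstrassP_neg]
    congr 1
    apply Complex.ext <;> simp [h]
  · rw [← PeriodPair.weierstrassP_neg, ← weierstrassP_add_period hω
      (z := -(starRingEnd ℂ z)) (l := 2 * ω)]
    · congr 1
      apply Complex.ext <;> simp [h]; ring
    · rw [mem_rect_lattice]; exact ⟨1, 0, by simp, by simp⟩
  · congr 1
    apply Complex.ext <;> simp [h]
  · rw [← weierstrassP_add_period hω (z := starRingEnd ℂ z) (l := 2 * Real.pi * I)]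
    · congr 1
      apply Complex.ext <;> simp [h]; ring
    · rw [mem_rect_lattice]; exact ⟨0, 1, by simp, by simp⟩

theorem eq_zero_of_mem_lattice {z : ℂ} (hz : z ∈ (rectPeriods ω hω).lattice)
    (h1 : |z.re| < 2 * ω) (h2 : |z.im| < 2 * Real.pi) : z = 0 := by
  obtain ⟨m, n, hm, hn⟩ := (mem_rect_lattice hω).mp hz
  have aux : ∀ {a : ℝ} {k : ℤ}, 0 < a → |2 * a * k| < 2 * a → k = 0 := by
    intro a k ha hk
    rw [abs_mul, abs_of_pos (by positivity : 0 < 2 * a)] at hk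
    have : |(k : ℝ)| < 1 := by
      by_contra! hc
      nlinarith
    rw [← Int.abs_lt_one_iff]
    exact_mod_cast this
  have hm0 := aux hω (hm ▸ h1)
  have hn0 := aux Real.pi_pos (hn ▸ h2)
  apply Complex.ext <;> simp [hm, hn, hm0, hn0]

theorem notMem_lattice_of_mem_closedRect {z : ℂ} (h1 : 0 ≤ z.re) (h2 : z.re ≤ ω) (h3 : 0 ≤ z.im)
    (h4 : z.im ≤ Real.pi) (h0 : z ≠ 0) : z ∉ (rectPeriods ω hω).lattice := fun hm ↦
  h0 (eq_zero_of_mem_lattice hω hm (by rw [abs_of_nonneg h1]; linarith)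
    (by rw [abs_of_nonneg h3]; linarith [Real.pi_pos]))

theorem ne_zero_of_mem_openRect {z : ℂ} (hz : z ∈ openRect ω) : z ≠ 0 := by
  rintro rfl
  exact lt_irrefl _ hz.1

theorem notMem_lattice_of_mem_openRect {z : ℂ} (hz : z ∈ openRect ω) :
    z ∉ (rectPeriods ω hω).lattice :=
  notMem_lattice_of_mem_closedRect hω hz.1.le hz.2.1.le hz.2.2.1.le hz.2.2.2.le
    (ne_zero_of_mem_openRect hz)

theorem injOn_weierstrassP : Set.InjOn ℘[rectPeriods ω hω] (openRect ω) := by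
  intro a ha b hb h
  have hnm := (rectPeriods ω hω).weierstrassP_eq_imp (notMem_lattice_of_mem_openRect hω ha)
    (notMem_lattice_of_mem_openRect hω hb) h
  obtain ⟨a1, a2, a3, a4⟩ := ha
  obtain ⟨b1, b2, b3, b4⟩ := hb
  rcases hnm with hm | hm
  · have := eq_zero_of_mem_lattice hω hm (by rw [sub_re, abs_lt]; constructor <;> linarith)
      (by rw [sub_im, abs_lt]; constructor <;> linarith)
    exact (sub_eq_zero.mp this).symm
  · have := eq_zero_of_mem_lattice hω hm (by rw [add_re, abs_lt]; constructor <;> linarith)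
      (by rw [add_im, abs_lt]; constructor <;> linarith)
    have := congrArg Complex.re this
    simp at this
    linarith

/-- A real value at `z` gives `℘ (conj z) = ℘ z`, so `2 i Im z` or `2 Re z` would be a period. -/
theorem weierstrassP_im_ne_zero {z : ℂ} (hz : z ∈ openRect ω) :
    (℘[rectPeriods ω hω] z).im ≠ 0 := by
  intro h
  rw [← Complex.conj_eq_iff_im, ← weierstrassP_conj] at h
  have hn := notMem_lattice_of_mem_openRect hω hz
  have hnc : starRingEnd ℂ z ∉ (rectPeriods ω hω).lattice := by
    rw [mem_rect_lattice] at hn ⊢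
    rintro ⟨m, n, h1, h2⟩
    exact hn ⟨m, -n, by simpa using h1, by simp at h2 ⊢; linarith⟩
  obtain ⟨a1, a2, a3, a4⟩ := hz
  rcases (rectPeriods ω hω).weierstrassP_eq_imp hnc hn h with hm | hm
  · have := congrArg Complex.im (eq_zero_of_mem_lattice hω hm (by simpa using hω) (by
      simp only [sub_im, conj_im, sub_neg_eq_add]
      rw [abs_of_pos] <;> linarith))
    simp at this
    linarith
  · have := congrArg Complex.re (eq_zero_of_mem_lattice hω hm (by
      simp only [add_re, conj_re]
      rw [abs_of_pos] <;> linarith) (by simp [Real.pi_pos]))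
    simp at this
    linarith

theorem openRect_eq : openRect ω = Set.Ioo 0 ω ×ℂ Set.Ioo 0 Real.pi := by
  ext z
  simp [openRect, mem_reProdIm, and_assoc]

theorem isOpen_openRect : IsOpen (openRect ω) := by
  rw [openRect_eq]; exact isOpen_Ioo.reProdIm isOpen_Ioo

theorem isPreconnected_openRect : IsPreconnected (openRect ω) := by
  rw [openRect_eq]
  have h1 : Convex ℝ (Complex.re ⁻¹' Set.Ioo 0 ω) := (convex_Ioo 0 ω).linear_preimage Complex.reLm
  have h2 : Convex ℝ (Complex.im ⁻¹' Set.Ioo 0 Real.pi) :=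
    (convex_Ioo 0 Real.pi).linear_preimage Complex.imLm
  exact (h1.inter h2).isPreconnected

/-- On the diagonal `z = t (1 + i)` the principal part `1 / z² = -i / (2 t²)` dominates as
`t → 0`. -/
theorem exists_weierstrassP_im_neg : ∃ z ∈ openRect ω, (℘[rectPeriods ω hω] z).im < 0 := by
  set L := rectPeriods ω hω
  have hc : ContinuousAt (PeriodPair.weierstrassPExcept L 0) 0 :=
    (L.analyticAt_weierstrassPExcept 0).continuousAt
  have ht : Tendsto (fun t : ℝ ↦ (t : ℂ) * (1 + I)) (𝓝[>] 0) (𝓝 0) := by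
    have : Continuous (fun t : ℝ ↦ (t : ℂ) * (1 + I)) := by fun_prop
    simpa using (this.tendsto 0).mono_left nhdsWithin_le_nhds
  have h1 : ∀ᶠ z in 𝓝 (0 : ℂ), ‖PeriodPair.weierstrassPExcept L 0 z‖ < 1 := by
    have := hc.norm.tendsto
    simp only [PeriodPair.weierstrassPExcept_zero, norm_zero] at this
    exact this.eventually_lt_const one_pos
  have hsmall : ∀ c : ℝ, 0 < c → ∀ᶠ t : ℝ in 𝓝[>] 0, t < c := fun c hc ↦
    (eventually_lt_nhds hc).filter_mono nhdsWithin_le_nhds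
  have hpos : ∀ᶠ t : ℝ in 𝓝[>] 0, 0 < t := self_mem_nhdsWithin
  obtain ⟨t, ht1, ht0, h2, h3, h4⟩ := ((ht.eventually h1).and (hpos.and
    ((hsmall ω hω).and ((hsmall _ Real.pi_pos).and (hsmall (1 / 2) (by norm_num)))))).exists
  refine ⟨t * (1 + I), ⟨by simpa using ht0, by simpa using h2, by simpa using ht0,
    by simpa using h3⟩, ?_⟩
  have := L.weierstrassPExcept_add 0 (t * (1 + I))
  simp only [ZeroMemClass.coe_zero, sub_zero, ne_eq, OfNat.ofNat_ne_zero, not_false_eq_true,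
    zero_pow, div_zero] at this
  rw [← this, add_im]
  have e : 1 / ((t : ℂ) * (1 + I)) ^ 2 = ((1 / (2 * t ^ 2) : ℝ) : ℂ) * (-I) := by
    have : (t : ℂ) ≠ 0 := by exact_mod_cast ht0.ne'
    have hI : ((1 : ℂ) + I) ^ 2 = 2 * I := by linear_combination I_sq
    rw [mul_pow, hI]
    push_cast
    field_simp
    simp
  rw [e, im_ofReal_mul, neg_im, I_im]
  have h5 := (abs_le.mp (Complex.abs_im_le_norm (PeriodPair.weierstrassPExcept L 0 (t * (1 + I))))).2
  have h6 : 1 < 1 / (2 * t ^ 2) := by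
    rw [lt_div_iff₀ (by positivity)]
    nlinarith
  linarith

theorem weierstrassP_im_neg {z : ℂ} (hz : z ∈ openRect ω) :
    (℘[rectPeriods ω hω] z).im < 0 := by
  have hcont : ContinuousOn (fun z ↦ (℘[rectPeriods ω hω] z).im) (openRect ω) :=
    Complex.continuous_im.comp_continuousOn
      ((rectPeriods ω hω).differentiableOn_weierstrassP.continuousOn.mono
        fun w hw ↦ notMem_lattice_of_mem_openRect hω hw)
  obtain ⟨w, hw, hneg⟩ := exists_weierstrassP_im_neg hω
  by_contra! hpos
  obtain ⟨x, hx, hx0⟩ := isPreconnected_openRect.intermediate_value hw hz hcont ⟨hneg.le, hpos⟩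
  exact weierstrassP_im_ne_zero hω hx hx0

/-- The image of the rectangle is relatively closed in the lower half-plane. -/
theorem closure_image_inter_subset :
    closure (℘[rectPeriods ω hω] '' openRect ω) ∩ {w | w.im < 0} ⊆
      ℘[rectPeriods ω hω] '' openRect ω := by
  set L := rectPeriods ω hω
  rintro c ⟨hc, hneg⟩
  obtain ⟨v, hv, hvc⟩ := mem_closure_iff_seq_limit.mp hc
  choose u hu huv using hv
  set K : Set ℂ := Set.Icc 0 ω ×ℂ Set.Icc 0 Real.pi with hK
  have hKc : IsCompact K := isCompact_Icc.reProdIm isCompact_Icc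
  have huK : ∀ n, u n ∈ K := fun n ↦
    ⟨⟨(hu n).1.le, (hu n).2.1.le⟩, ⟨(hu n).2.2.1.le, (hu n).2.2.2.le⟩⟩
  obtain ⟨z, hzK, φ, hφ, hlim⟩ := hKc.tendsto_subseq huK
  have hPlim : Tendsto (fun n ↦ ℘[L] (u (φ n))) atTop (𝓝 c) := by
    simpa only [huv, Function.comp_def] using hvc.comp hφ.tendsto_atTop
  obtain ⟨⟨z1, z2⟩, z3, z4⟩ := hzK
  have hz0 : z ≠ 0 := by
    rintro rfl
    have h1 : Tendsto (u ∘ φ) atTop (𝓝[≠] 0) :=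
      tendsto_nhdsWithin_iff.mpr
        ⟨hlim, Eventually.of_forall fun n ↦ ne_zero_of_mem_openRect (hu _)⟩
    exact hPlim.not_tendsto (Metric.disjoint_nhds_cobounded _)
      (L.tendsto_weierstrassP_zero.comp h1)
  have hzL := notMem_lattice_of_mem_closedRect hω z1 z2 z3 z4 hz0
  have hPz : ℘[L] z = c := tendsto_nhds_unique
    ((L.analyticOnNhd_weierstrassP z hzL).continuousAt.tendsto.comp hlim) hPlim
  refine ⟨z, ?_, hPz⟩
  by_contra hzR
  have hbd : z.re = 0 ∨ z.re = ω ∨ z.im = 0 ∨ z.im = Real.pi := by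
    by_contra! hne
    exact hzR ⟨lt_of_le_of_ne z1 hne.1.symm, lt_of_le_of_ne z2 hne.2.1,
      lt_of_le_of_ne z3 hne.2.2.1.symm, lt_of_le_of_ne z4 hne.2.2.2⟩
  have := weierstrassP_im_eq_zero hω hbd
  rw [hPz] at this
  exact hneg.ne this

theorem isOpen_image_weierstrassP : IsOpen (℘[rectPeriods ω hω] '' openRect ω) := by
  have han : AnalyticOnNhd ℂ ℘[rectPeriods ω hω] (openRect ω) :=
    (rectPeriods ω hω).analyticOnNhd_weierstrassP.mono
      fun w hw ↦ notMem_lattice_of_mem_openRect hω hw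
  refine (han.is_constant_or_isOpen isPreconnected_openRect).resolve_left ?_
    _ subset_rfl isOpen_openRect
  rintro ⟨w, hw⟩
  have hpi := Real.pi_pos
  have h1 : (⟨ω / 2, Real.pi / 2⟩ : ℂ) ∈ openRect ω := by
    refine ⟨?_, ?_, ?_, ?_⟩ <;> simp only <;> linarith
  have h2 : (⟨ω / 2, Real.pi / 3⟩ : ℂ) ∈ openRect ω := by
    refine ⟨?_, ?_, ?_, ?_⟩ <;> simp only <;> linarith
  have := congrArg Complex.im (injOn_weierstrassP hω h1 h2 ((hw _ h1).trans (hw _ h2).symm))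
  simp only at this
  linarith

theorem bijOn_weierstrassP :
    Set.BijOn ℘[rectPeriods ω hω] (openRect ω) {w | w.im < 0} := by
  refine ⟨fun z hz ↦ weierstrassP_im_neg hω hz, injOn_weierstrassP hω, ?_⟩
  obtain ⟨z, hz, hneg⟩ := exists_weierstrassP_im_neg hω
  exact (convex_halfSpace_im_lt 0).isPreconnected.subset_of_closure_inter_subset
    (isOpen_image_weierstrassP hω) ⟨_, hneg, z, hz, rfl⟩ (closure_image_inter_subset hω)

theorem Pfun_eq (ζ : ℂ) : Pfun ω ζ = (℘[rectPeriods ω hω] (ω + Real.pi * I - ζ) -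
    ℘[rectPeriods ω hω] (ω + Real.pi * I)) / 4 := by
  rw [Pfun, wp_eq hω, wp_eq hω, ← PeriodPair.weierstrassP_neg,
    ← weierstrassP_add_period hω (l := 2 * ω + 2 * Real.pi * I)
      ((mem_rect_lattice hω).mpr ⟨1, 1, by simp, by simp⟩)]
  congr 3
  ring

theorem reflect_mem_openRect {ζ : ℂ} :
    ω + Real.pi * I - ζ ∈ openRect ω ↔ ζ ∈ openRect ω := by
  simp only [openRect, Set.mem_ofPred_eq, sub_re, add_re, ofReal_re, mul_re, I_re, mul_zero,
    ofReal_im, I_im, mul_one, sub_zero, add_zero, sub_im, add_im, mul_im, zero_add]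
  constructor <;> rintro ⟨h1, h2, h3, h4⟩ <;> refine ⟨?_, ?_, ?_, ?_⟩ <;> linarith

end Rect

/-- `P` is a holomorphic bijection from the open rectangle
`R₀ = {0 < Re ζ < ω, 0 < Im ζ < π}` onto the open lower half-plane. -/
theorem Pfun_bijOn_rectangle (ω : ℝ) (hω : 0 < ω) :
    DifferentiableOn ℂ (Pfun ω)
      {ζ : ℂ | 0 < ζ.re ∧ ζ.re < ω ∧ 0 < ζ.im ∧ ζ.im < Real.pi} ∧
    Set.BijOn (Pfun ω)
      {ζ : ℂ | 0 < ζ.re ∧ ζ.re < ω ∧ 0 < ζ.im ∧ ζ.im < Real.pi}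
      {w : ℂ | w.im < 0} := by
  change DifferentiableOn ℂ (Pfun ω) (openRect ω) ∧ Set.BijOn (Pfun ω) (openRect ω) {w | w.im < 0}
  set L := rectPeriods ω hω
  have hfun : Pfun ω = fun ζ ↦ (℘[L] (ω + Real.pi * I - ζ) - ℘[L] (ω + Real.pi * I)) / 4 :=
    funext (Pfun_eq hω)
  have hre : (℘[L] (ω + Real.pi * I)).im = 0 :=
    weierstrassP_im_eq_zero hω (Or.inr (Or.inl (by simp)))
  constructor
  · rw [hfun]
    refine DifferentiableOn.div_const (DifferentiableOn.sub_const ?_ _) 4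
    exact L.differentiableOn_weierstrassP.comp (by fun_prop)
      fun ζ hζ ↦ notMem_lattice_of_mem_openRect hω (reflect_mem_openRect.mpr hζ)
  · have hrefl : Set.BijOn (fun ζ : ℂ ↦ ω + Real.pi * I - ζ) (openRect ω) (openRect ω) :=
      ⟨fun ζ hζ ↦ reflect_mem_openRect.mpr hζ, fun a _ b _ h ↦ sub_right_injective h,
        fun ζ hζ ↦ ⟨_, reflect_mem_openRect.mpr hζ, by ring⟩⟩
    have haff : Set.BijOn (fun w : ℂ ↦ (w - ℘[L] (ω + Real.pi * I)) / 4)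
        {w | w.im < 0} {w | w.im < 0} := by
      have him : ∀ w : ℂ, ((w - ℘[L] (ω + Real.pi * I)) / 4).im = w.im / 4 := by
        intro w
        rw [div_ofNat_im, sub_im, hre, sub_zero]
      refine ⟨fun w hw ↦ ?_, fun a _ b _ h ↦ ?_,
        fun w hw ↦ ⟨4 * w + ℘[L] (ω + Real.pi * I), ?_, by ring⟩⟩
      · have hw : w.im < 0 := hw
        have := him w
        simp only [Set.mem_ofPred_eq]
        linarith
      · simpa [sub_eq_zero] using h
      · have hw : w.im < 0 := hw
        simp only [Set.mem_ofPred_eq, add_im, hre]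
        simp only [mul_im, re_ofNat, im_ofNat, zero_mul, add_zero]
        linarith
    rw [hfun]
    exact haff.comp ((bijOn_weierstrassP hω).comp hrefl)
end
end
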